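/- (Motzkin's observation over ℂ.) Let p be a point of ℂ^n and let L be a finite family of at least two distinct (affine) lines in ℂ^n, each passing through p. If the union of the lines in L is not contained in any 3-dimensional affine subspace of ℂ^n, then there exist two distinct lines ℓ_1, ℓ_2 ∈ L such that the 2-dimensional plane spanned by ℓ_1 ∪ ℓ_2 contains no other line of the family L. -/

import Mathlib

/-!
Suppose every plane spanned by two lines of the pencil contains a third one. Choose direction
vectors `v i` and, for every such plane `l`, coordinates of the `v i` lying in it: they are the
nonzero rows of a matrix `Y l` with two columns. Let `Q l` be the orthogonal projection onto the
column space of `Y l` and `χ l` the diagonal matrix supported on the indices of the plane. The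
Hermitian matrix `M = ∑ l, c l • (χ l - Q l)` annihilates the family `v`, so its rank is at most
`N - dim (span v)`, where `N` is the number of lines.

Rescaling each `v i` by a positive factor changes nothing in the hypotheses, and the factors can be
chosen so that the diagonal of every `Q l` is balanced on average: the total defect is the gradient
of a function bounded below, hence can be made small. With `c l = r (r - 1) / (r - 2)` for a plane
with `r` lines the diagonal of `M` is then almost constant, equal to `N - 1`, while each
off-diagonal entry comes from a single plane and the sum of their squared norms is at most
`4 N (N - 1)`. The inequality `|tr M|² ≤ rank M * ‖M‖²` for the Frobenius norm then forces
`dim (span v) ≤ 3`.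
-/

open Finset Matrix Module

section Sums

variable {ι : Type*}

lemma sum_sum_eq_sum_diag_add_sum_offDiag {M : Type*} [AddCommMonoid M] (s : Finset ι)
    (f : ι → ι → M) :
    ∑ i ∈ s, ∑ j ∈ s, f i j = ∑ i ∈ s, f i i + ∑ p ∈ s.offDiag, f p.1 p.2 := by
  classical
  rw [← sum_product', ← diag_union_offDiag, sum_union (disjoint_diag_offDiag s), sum_diag]

lemma sum_offDiag_add {R : Type*} [CommRing R] (s : Finset ι) (t : ι → R) :
    ∑ p ∈ s.offDiag, (t p.1 + t p.2) = 2 * (#s - 1) * ∑ i ∈ s, t i := by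
  have h := sum_sum_eq_sum_diag_add_sum_offDiag s fun i j ↦ t i + t j
  simp only [sum_add_distrib, sum_const, nsmul_eq_mul, ← mul_sum] at h ⊢
  linear_combination -h

end Sums

section Hermitian

variable {𝕜 ι : Type*} [RCLike 𝕜] [Fintype ι]

lemma sum_norm_sq_eq_trace_mul_self {A : Matrix ι ι 𝕜} (hA : A.IsHermitian) :
    ((∑ i, ∑ j, ‖A i j‖ ^ 2 : ℝ) : 𝕜) = (A * A).trace := by
  push_cast
  refine sum_congr rfl fun i _ ↦ (sum_congr rfl fun j _ ↦ ?_).trans (mul_apply ..).symm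
  rw [← hA.apply j i, ← RCLike.mul_conj, starRingEnd_apply]

lemma trace_mul_self_eq_sum_eigenvalues_sq [DecidableEq ι] {A : Matrix ι ι 𝕜}
    (hA : A.IsHermitian) : (A * A).trace = ((∑ i, hA.eigenvalues i ^ 2 : ℝ) : 𝕜) := by
  conv_lhs =>
    rw [hA.spectral_theorem, ← map_mul, Unitary.conjStarAlgAut_apply, trace_mul_cycle,
      Unitary.coe_star_mul_self, one_mul, diagonal_mul_diagonal, trace_diagonal]
  push_cast
  exact sum_congr rfl fun i _ ↦ (sq _).symm

/-- Cauchy–Schwarz for the nonzero eigenvalues. -/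
lemma norm_trace_sq_le_rank_mul_sum_norm_sq {A : Matrix ι ι 𝕜} (hA : A.IsHermitian) :
    ‖A.trace‖ ^ 2 ≤ A.rank * ∑ i, ∑ j, ‖A i j‖ ^ 2 := by
  classical
  have htrace : A.trace = ((∑ i with hA.eigenvalues i ≠ 0, hA.eigenvalues i : ℝ) : 𝕜) := by
    rw [hA.trace_eq_sum_eigenvalues, sum_filter_ne_zero]
    push_cast
    rfl
  have hfrob : ∑ i, ∑ j, ‖A i j‖ ^ 2 = ∑ i, hA.eigenvalues i ^ 2 := RCLike.ofReal_injective <|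
    (sum_norm_sq_eq_trace_mul_self hA).trans (trace_mul_self_eq_sum_eigenvalues_sq hA)
  rw [htrace, hfrob, RCLike.norm_ofReal, sq_abs, hA.rank_eq_card_non_zero_eigs,
    Fintype.card_subtype]
  exact sq_sum_le_card_mul_sum_sq.trans <| mul_le_mul_of_nonneg_left
    (sum_le_sum_of_subset_of_nonneg (filter_subset _ _) fun _ _ _ ↦ sq_nonneg _)
    (Nat.cast_nonneg _)

end Hermitian

lemma rank_add_finrank_span_range_le {𝕜 V m ι : Type*} [Field 𝕜] [AddCommGroup V] [Module 𝕜 V]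
    [Finite m] [Fintype ι] {A : Matrix m ι 𝕜} {v : ι → V} (h : ∀ i, ∑ j, A i j • v j = 0) :
    A.rank + finrank 𝕜 (Submodule.span 𝕜 (Set.range v)) ≤ Fintype.card ι := by
  have hrows : Submodule.span 𝕜 (Set.range A.row) ≤
      LinearMap.ker (Fintype.linearCombination 𝕜 v) := by
    rw [Submodule.span_le]
    rintro _ ⟨i, rfl⟩
    exact h i
  rw [rank_eq_finrank_span_row, ← Fintype.range_linearCombination 𝕜 v,
    ← finrank_fintype_fun_eq_card 𝕜,
    ← (Fintype.linearCombination 𝕜 v).finrank_range_add_finrank_ker, add_comm]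
  gcongr
  exact Submodule.finrank_mono hrows

section Gradient

open Filter

variable {E : Type*} [NormedAddCommGroup E] [InnerProductSpace ℝ E] [FiniteDimensional ℝ E]

lemma exists_forall_add_mul_norm_sq_le {f : E → ℝ} (hf : Continuous f)
    (hbdd : BddBelow (Set.range f)) {δ : ℝ} (hδ : 0 < δ) :
    ∃ x, ∀ y, f x + δ * ‖x‖ ^ 2 ≤ f y + δ * ‖y‖ ^ 2 := by
  obtain ⟨K, hK⟩ := hbdd
  refine Continuous.exists_forall_le (by fun_prop) ?_
  refine tendsto_atTop_add_left_of_le _ K (fun x ↦ hK ⟨x, rfl⟩) ?_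
  exact ((tendsto_pow_atTop two_ne_zero).comp
    (tendsto_norm_cocompact_atTop (E := E))).const_mul_atTop hδ

/-- A minimizer `x` of `f + δ ‖·‖²` satisfies `∇ f x = -2 δ x`, and comparing with the value at `0`
bounds `δ ‖x‖²` independently of `δ`. -/
lemma exists_norm_gradient_le {f : E → ℝ} {f' : E → E} (hf : ∀ x, HasGradientAt f (f' x) x)
    (hbdd : BddBelow (Set.range f)) {ε : ℝ} (hε : 0 < ε) : ∃ x, ‖f' x‖ ≤ ε := by
  have ⟨K, hK⟩ := hbdd
  have hK (x : E) : K ≤ f x := hK ⟨x, rfl⟩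
  set C := f 0 - K + 1
  have hC : 0 < C := by linarith [hK 0]
  set δ := ε ^ 2 / (4 * C) with hδ
  have hδpos : 0 < δ := by positivity
  obtain ⟨x, hx⟩ := exists_forall_add_mul_norm_sq_le
    (continuous_iff_continuousAt.2 fun x ↦ (hf x).continuousAt) hbdd hδpos
  have hgrad : f' x = -(2 * δ) • x := by
    have hmin : IsLocalMin (fun y ↦ f y + δ * ‖y‖ ^ 2) x := .of_forall hx
    have hderiv := hmin.hasFDerivAt_eq_zero <|
      (hf x).hasFDerivAt.add ((hasStrictFDerivAt_norm_sq x).hasFDerivAt.const_mul δ)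
    refine ext_inner_right ℝ fun y ↦ ?_
    have hy := DFunLike.congr_fun hderiv y
    simp only [_root_.add_apply, InnerProductSpace.toDual_apply_apply, _root_.smul_apply,
      coe_innerSL_apply, nsmul_eq_mul, Nat.cast_ofNat, smul_eq_mul, _root_.zero_apply] at hy
    rw [inner_smul_left, conj_trivial]
    linear_combination hy
  have hx0 : δ * ‖x‖ ^ 2 ≤ C := by
    have := hx 0
    rw [norm_zero] at this
    linarith [hK x]
  refine ⟨x, pow_le_pow_iff_left₀ (norm_nonneg _) hε.le two_ne_zero |>.1 ?_⟩
  calc ‖f' x‖ ^ 2 = 4 * δ * (δ * ‖x‖ ^ 2) := by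
        rw [hgrad, norm_smul, mul_pow, Real.norm_eq_abs, sq_abs]; ring
    _ ≤ 4 * δ * C := by gcongr
    _ = ε ^ 2 := by rw [hδ]; field_simp

end Gradient

section ColumnProjection

variable {𝕜 ι κ : Type*} [RCLike 𝕜] [Fintype ι] [Fintype κ] [DecidableEq κ]

/-- The matrix of the orthogonal projection onto the column space of `Y`, whose columns are assumed
to be linearly independent, i.e. `Yᴴ * Y` to be invertible. -/
noncomputable def colProj (Y : Matrix ι κ 𝕜) : Matrix ι ι 𝕜 := Y * (Yᴴ * Y)⁻¹ * Yᴴ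

lemma isHermitian_colProj (Y : Matrix ι κ 𝕜) : (colProj Y).IsHermitian :=
  isHermitian_mul_mul_conjTranspose Y (isHermitian_conjTranspose_mul_self Y).inv

variable {Y : Matrix ι κ 𝕜}

lemma colProj_apply_eq_zero_of_left {i : ι} (hi : Y i = 0) (j : ι) : colProj Y i j = 0 := by
  rw [colProj, Matrix.mul_assoc, mul_apply]
  exact sum_eq_zero fun k _ ↦ by rw [hi, Pi.zero_apply, zero_mul]

lemma colProj_apply_eq_zero_of_right {j : ι} (hj : Y j = 0) (i : ι) : colProj Y i j = 0 := by
  rw [← (isHermitian_colProj Y).apply, colProj_apply_eq_zero_of_left hj, star_zero]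

lemma colProj_mul_self (hY : IsUnit (Yᴴ * Y).det) : colProj Y * Y = Y := by
  rw [colProj, Matrix.mul_assoc, Matrix.mul_assoc, nonsing_inv_mul _ hY, Matrix.mul_one]

lemma colProj_mul_colProj (hY : IsUnit (Yᴴ * Y).det) : colProj Y * colProj Y = colProj Y := by
  nth_rw 2 [colProj]
  rw [← Matrix.mul_assoc, ← Matrix.mul_assoc, colProj_mul_self hY, colProj]

lemma trace_colProj (hY : IsUnit (Yᴴ * Y).det) : (colProj Y).trace = Fintype.card κ := by
  rw [colProj, trace_mul_comm, ← Matrix.mul_assoc, mul_nonsing_inv _ hY, trace_one]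

lemma sum_norm_colProj_sq (hY : IsUnit (Yᴴ * Y).det) :
    ∑ i, ∑ j, ‖colProj Y i j‖ ^ 2 = Fintype.card κ := by
  have h := sum_norm_sq_eq_trace_mul_self (isHermitian_colProj Y)
  rw [colProj_mul_colProj hY, trace_colProj hY] at h
  exact_mod_cast h

end ColumnProjection

section TwoColumns

/-- The `2 × 2` minor on the rows `i` and `j` of a matrix with two columns. -/
def rowMinor {R ι : Type*} [CommRing R] (Y : Matrix ι (Fin 2) R) (i j : ι) : R :=
  Y i 0 * Y j 1 - Y i 1 * Y j 0

variable {𝕜 ι : Type*} [RCLike 𝕜]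

lemma norm_rowMinor_comm (Y : Matrix ι (Fin 2) 𝕜) (i j : ι) :
    ‖rowMinor Y i j‖ = ‖rowMinor Y j i‖ := by
  rw [← norm_neg, rowMinor, rowMinor]
  ring_nf

variable [Fintype ι]

/-- The Gram determinant of the two columns of `Y`, written by the Cauchy–Binet formula as the sum
of the squared norms of the `2 × 2` minors; the half accounts for the two orders of a pair of
rows. -/
noncomputable def gramDet (Y : Matrix ι (Fin 2) 𝕜) : ℝ := (∑ i, ∑ j, ‖rowMinor Y i j‖ ^ 2) / 2

/-- The leverage score of the row `i` of `Y`: the diagonal entry at `i` of the projection onto the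
column space of `Y`. -/
noncomputable def leverage (Y : Matrix ι (Fin 2) 𝕜) (i : ι) : ℝ :=
  (∑ j, ‖rowMinor Y i j‖ ^ 2) / gramDet Y

lemma mul_adjugate_mul_conjTranspose_apply_self (Y : Matrix ι (Fin 2) 𝕜) (i : ι) :
    (Y * (Yᴴ * Y).adjugate * Yᴴ) i i = ((∑ j, ‖rowMinor Y i j‖ ^ 2 : ℝ) : 𝕜) := by
  push_cast
  simp only [adjugate_fin_two, mul_apply, Fin.sum_univ_two, of_apply, conjTranspose_apply,
    cons_val', cons_val_zero, cons_val_one, cons_val_fin_one, ← RCLike.mul_conj, rowMinor,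
    map_sub, map_mul, RCLike.star_def]
  simp only [mul_neg, sum_mul, mul_sum, ← sum_neg_distrib, ← sum_add_distrib]
  exact sum_congr rfl fun j _ ↦ by ring

lemma det_conjTranspose_mul_self (Y : Matrix ι (Fin 2) 𝕜) :
    (Yᴴ * Y).det = (gramDet Y : 𝕜) := by
  have htrace : 2 * (Yᴴ * Y).det = (Y * (Yᴴ * Y).adjugate * Yᴴ).trace := by
    rw [trace_mul_comm, ← Matrix.mul_assoc, mul_adjugate, trace_smul, trace_one, Fintype.card_fin,
      smul_eq_mul, mul_comm, Nat.cast_ofNat]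
  simp only [trace, diag_apply, mul_adjugate_mul_conjTranspose_apply_self] at htrace
  rw [gramDet, RCLike.ofReal_div, RCLike.ofReal_sum, ← htrace, RCLike.ofReal_ofNat,
    mul_div_cancel_left₀ _ two_ne_zero]

lemma colProj_apply_self (Y : Matrix ι (Fin 2) 𝕜) (i : ι) :
    colProj Y i i = (leverage Y i : 𝕜) := by
  rw [colProj, Matrix.inv_def, Matrix.mul_smul, Matrix.smul_mul, Matrix.smul_apply,
    mul_adjugate_mul_conjTranspose_apply_self, det_conjTranspose_mul_self, Ring.inverse_eq_inv',
    smul_eq_mul, leverage, RCLike.ofReal_div, div_eq_inv_mul]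

variable {Y : Matrix ι (Fin 2) 𝕜}

lemma sum_leverage (hY : 0 < gramDet Y) : ∑ i, leverage Y i = 2 := by
  simp only [leverage]
  rw [← sum_div, div_eq_iff hY.ne', gramDet]
  ring

lemma leverage_eq_zero {i : ι} (hi : Y i = 0) : leverage Y i = 0 := by
  have h := colProj_apply_self Y i
  rw [colProj_apply_eq_zero_of_left hi] at h
  exact_mod_cast h.symm

lemma norm_rowMinor_sq_le_gramDet (Y : Matrix ι (Fin 2) 𝕜) {i j : ι} (hij : i ≠ j) :
    ‖rowMinor Y i j‖ ^ 2 ≤ gramDet Y := by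
  classical
  have hpairs : ∑ p ∈ {(i, j), (j, i)}, ‖rowMinor Y p.1 p.2‖ ^ 2 ≤
      ∑ p : ι × ι, ‖rowMinor Y p.1 p.2‖ ^ 2 :=
    sum_le_sum_of_subset_of_nonneg (subset_univ _) fun _ _ _ ↦ sq_nonneg _
  rw [sum_pair (by simp [hij]), norm_rowMinor_comm Y j i, Fintype.sum_prod_type] at hpairs
  rw [gramDet]
  linarith

lemma isUnit_det_conjTranspose_mul_self (hY : 0 < gramDet Y) : IsUnit (Yᴴ * Y).det := by
  rw [det_conjTranspose_mul_self, isUnit_iff_ne_zero]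
  exact_mod_cast hY.ne'

end TwoColumns

section Rescaling

variable {𝕜 ι : Type*} [RCLike 𝕜]

/-- Multiplication of the row `i` of `Y` by `exp (t i / 2)`, so that the squared norm of the minor
on the rows `i` and `j` is multiplied by `exp (t i + t j)`. -/
noncomputable def rescaleRows {κ : Type*} (t : EuclideanSpace ℝ ι) (Y : Matrix ι κ 𝕜) :
    Matrix ι κ 𝕜 := of fun i ↦ (Real.exp (t i / 2) : 𝕜) • Y i

lemma rescaleRows_apply_eq_zero_iff {κ : Type*} {t : EuclideanSpace ℝ ι} {Y : Matrix ι κ 𝕜}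
    {i : ι} :
    rescaleRows t Y i = 0 ↔ Y i = 0 := by
  change (Real.exp (t i / 2) : 𝕜) • Y i = 0 ↔ Y i = 0
  exact smul_eq_zero_iff_right (RCLike.ofReal_ne_zero.2 (Real.exp_ne_zero _))

lemma norm_rowMinor_rescaleRows_sq (t : EuclideanSpace ℝ ι) (Y : Matrix ι (Fin 2) 𝕜) (i j : ι) :
    ‖rowMinor (rescaleRows t Y) i j‖ ^ 2 = Real.exp (t i + t j) * ‖rowMinor Y i j‖ ^ 2 := by
  have hminor : rowMinor (rescaleRows t Y) i j =
      ((Real.exp (t i / 2) * Real.exp (t j / 2) : ℝ) : 𝕜) * rowMinor Y i j := by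
    simp only [rowMinor, rescaleRows, of_apply, Pi.smul_apply, smul_eq_mul, RCLike.ofReal_mul]
    ring
  rw [hminor, norm_mul, mul_pow, RCLike.norm_ofReal, sq_abs, ← Real.exp_add, ← Real.exp_nat_mul]
  ring_nf

lemma rowMinor_rescaleRows_eq_zero_iff {t : EuclideanSpace ℝ ι} {Y : Matrix ι (Fin 2) 𝕜}
    {i j : ι} :
    rowMinor (rescaleRows t Y) i j = 0 ↔ rowMinor Y i j = 0 := by
  have hsq (z : 𝕜) : z = 0 ↔ ‖z‖ ^ 2 = 0 := by rw [sq_eq_zero_iff, norm_eq_zero]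
  rw [hsq, norm_rowMinor_rescaleRows_sq, mul_eq_zero_iff_left (Real.exp_ne_zero _), ← hsq]

variable [Fintype ι]

lemma hasFDerivAt_gramDet_rescaleRows (t : EuclideanSpace ℝ ι) (Y : Matrix ι (Fin 2) 𝕜) :
    HasFDerivAt (fun s ↦ gramDet (rescaleRows s Y))
      (∑ i, (∑ j, ‖rowMinor (rescaleRows t Y) i j‖ ^ 2) • EuclideanSpace.proj (𝕜 := ℝ) i) t := by
  have hproj (i : ι) : HasFDerivAt (fun s : EuclideanSpace ℝ ι ↦ s i)
      (EuclideanSpace.proj (𝕜 := ℝ) i) t := (EuclideanSpace.proj (𝕜 := ℝ) i).hasFDerivAt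
  have hsum := (HasFDerivAt.fun_sum (u := univ) fun i _ ↦ HasFDerivAt.fun_sum (u := univ)
    fun j _ ↦ ((hproj i).fun_add (hproj j)).exp.mul_const (‖rowMinor Y i j‖ ^ 2)).mul_const 2⁻¹
  simp only [gramDet, norm_rowMinor_rescaleRows_sq, div_eq_mul_inv]
  refine hsum.congr_fderiv (ContinuousLinearMap.ext fun w ↦ ?_)
  have hsymm : ∑ i, ∑ j, Real.exp (t i + t j) * (‖rowMinor Y i j‖ ^ 2 * w j) =
      ∑ i, ∑ j, Real.exp (t i + t j) * (‖rowMinor Y i j‖ ^ 2 * w i) := by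
    rw [sum_comm]
    simp only [norm_rowMinor_comm Y, add_comm]
  simp only [_root_.sum_apply, _root_.smul_apply, _root_.add_apply, PiLp.proj_apply, smul_eq_mul,
    sum_mul, mul_add, sum_add_distrib, mul_left_comm (‖_‖ ^ 2), mul_assoc]
  rw [hsymm]
  ring

end Rescaling

section RowSupport

open scoped Classical in
/-- The set of indices of the nonzero rows of `Y`. -/
noncomputable def rowSupport {R ι κ : Type*} [Zero R] [Fintype ι] (Y : Matrix ι κ R) : Finset ι :=
  {i | Y i ≠ 0}

lemma mem_rowSupport {R ι κ : Type*} [Zero R] [Fintype ι] {Y : Matrix ι κ R} {i : ι} :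
    i ∈ rowSupport Y ↔ Y i ≠ 0 := by
  simp only [rowSupport, mem_filter_univ]

variable {𝕜 ι : Type*} [RCLike 𝕜] [Fintype ι]

lemma rowSupport_rescaleRows {κ : Type*} (t : EuclideanSpace ℝ ι) (Y : Matrix ι κ 𝕜) :
    rowSupport (rescaleRows t Y) = rowSupport Y := by
  ext i
  rw [mem_rowSupport, mem_rowSupport, ne_eq, rescaleRows_apply_eq_zero_iff]

variable {Y : Matrix ι (Fin 2) 𝕜}

lemma gramDet_pos_of_pairwise_rowMinor_ne_zero (hcard : 2 ≤ #(rowSupport Y))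
    (hY : (rowSupport Y : Set ι).Pairwise fun i j ↦ rowMinor Y i j ≠ 0) : 0 < gramDet Y := by
  obtain ⟨i, hi, j, hj, hij⟩ := one_lt_card.1 hcard
  have := norm_pos_iff.2 (hY hi hj hij)
  exact (by positivity : 0 < ‖rowMinor Y i j‖ ^ 2).trans_le (norm_rowMinor_sq_le_gramDet Y hij)

lemma sum_rowSupport_leverage (hY : 0 < gramDet Y) : ∑ i ∈ rowSupport Y, leverage Y i = 2 := by
  rw [← sum_leverage hY]
  refine sum_subset (subset_univ _) fun i _ hi ↦ leverage_eq_zero ?_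
  rwa [mem_rowSupport, not_not] at hi

lemma sum_offDiag_norm_colProj_sq_le (hY : 0 < gramDet Y) :
    ∑ p ∈ univ.offDiag, ‖colProj Y p.1 p.2‖ ^ 2 ≤ 2 - 4 / #(rowSupport Y) := by
  have htotal := sum_norm_colProj_sq (isUnit_det_conjTranspose_mul_self hY)
  rw [sum_sum_eq_sum_diag_add_sum_offDiag, Fintype.card_fin, Nat.cast_ofNat] at htotal
  have hdiag : 4 / #(rowSupport Y) ≤ ∑ i, ‖colProj Y i i‖ ^ 2 := by
    calc (4 : ℝ) / #(rowSupport Y) = (∑ i ∈ rowSupport Y, leverage Y i) ^ 2 / #(rowSupport Y) := by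
          rw [sum_rowSupport_leverage hY]; norm_num
      _ ≤ ∑ i ∈ rowSupport Y, leverage Y i ^ 2 :=
          div_le_of_le_mul₀ (by positivity) (by positivity) <|
            sq_sum_le_card_mul_sum_sq.trans_eq (mul_comm ..)
      _ ≤ ∑ i, leverage Y i ^ 2 :=
          sum_le_sum_of_subset_of_nonneg (subset_univ _) fun _ _ _ ↦ sq_nonneg _
      _ = ∑ i, ‖colProj Y i i‖ ^ 2 := by
          simp only [colProj_apply_self, RCLike.norm_ofReal, sq_abs]
  linarith

end RowSupport

section Potential

variable {𝕜 ι : Type*} [RCLike 𝕜] [Fintype ι]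

/-- The deviation of the leverage score of the row `i` of `Y` from its average over the nonzero
rows; it is `0` for a zero row. -/
noncomputable def leverageDeviation (Y : Matrix ι (Fin 2) 𝕜) (i : ι) : ℝ :=
  leverage Y i - (rowSupport Y : Set ι).indicator (fun _ ↦ 2 / (#(rowSupport Y) : ℝ)) i

/-- A function of the row scaling `t` whose gradient at `t` is the leverage deviation of
`rescaleRows t Y`. -/
noncomputable def leveragePotential (Y : Matrix ι (Fin 2) 𝕜) (t : EuclideanSpace ℝ ι) : ℝ :=
  Real.log (gramDet (rescaleRows t Y)) - 2 / (#(rowSupport Y) : ℝ) * ∑ i ∈ rowSupport Y, t i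

variable {Y : Matrix ι (Fin 2) 𝕜}

lemma sum_leverageDeviation (hY : 0 < gramDet Y) : ∑ i, leverageDeviation Y i = 0 := by
  have hcard : (#(rowSupport Y) : ℝ) ≠ 0 := by
    intro h
    have hsum := sum_rowSupport_leverage hY
    rw [card_eq_zero.1 (Nat.cast_eq_zero.1 h), sum_empty] at hsum
    exact two_ne_zero hsum.symm
  simp only [leverageDeviation]
  rw [sum_sub_distrib, sum_leverage hY, sum_indicator_subset _ (subset_univ _), sum_const,
    nsmul_eq_mul, mul_div_cancel₀ _ hcard, sub_self]

lemma hasGradientAt_leveragePotential {t : EuclideanSpace ℝ ι}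
    (hY : 0 < gramDet (rescaleRows t Y)) :
    HasGradientAt (leveragePotential Y)
      (WithLp.toLp 2 (leverageDeviation (rescaleRows t Y))) t := by
  have hlin : HasFDerivAt (fun s : EuclideanSpace ℝ ι ↦ ∑ i ∈ rowSupport Y, s i)
      (∑ i ∈ rowSupport Y, EuclideanSpace.proj (𝕜 := ℝ) i) t :=
    HasFDerivAt.fun_sum fun i _ ↦ (EuclideanSpace.proj (𝕜 := ℝ) i).hasFDerivAt
  refine (((hasFDerivAt_gramDet_rescaleRows t Y).log hY.ne').fun_sub
    (hlin.const_mul (2 / (#(rowSupport Y) : ℝ)))).congr_fderiv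
    (ContinuousLinearMap.ext fun w ↦ ?_)
  simp only [_root_.sub_apply, _root_.smul_apply, _root_.sum_apply, PiLp.proj_apply, smul_eq_mul,
    InnerProductSpace.toDual_apply_apply, PiLp.inner_apply, RCLike.inner_apply, conj_trivial,
    leverageDeviation, leverage, rowSupport_rescaleRows, mul_sub, sum_sub_distrib, mul_sum]
  congr 1
  · exact sum_congr rfl fun i _ ↦ by ring
  · rw [← sum_indicator_subset _ (subset_univ _)]
    refine sum_congr rfl fun i _ ↦ ?_
    rw [Set.indicator_mul_left, mul_comm]

lemma sum_offDiag_log_norm_rowMinor_le (hne : (rowSupport Y).Nonempty)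
    (hY : (rowSupport Y : Set ι).Pairwise fun i j ↦ rowMinor Y i j ≠ 0) (t : EuclideanSpace ℝ ι) :
    ∑ p ∈ (rowSupport Y).offDiag, Real.log (‖rowMinor Y p.1 p.2‖ ^ 2) ≤
      #(rowSupport Y) * (#(rowSupport Y) - 1) * leveragePotential Y t := by
  have hpair : ∀ p ∈ (rowSupport Y).offDiag,
      t p.1 + t p.2 + Real.log (‖rowMinor Y p.1 p.2‖ ^ 2) ≤
        Real.log (gramDet (rescaleRows t Y)) := by
    rintro ⟨i, j⟩ hij
    obtain ⟨hi, hj, hij⟩ := mem_offDiag.1 hij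
    have hpos : 0 < ‖rowMinor Y i j‖ ^ 2 := by have := norm_pos_iff.2 (hY hi hj hij); positivity
    rw [← Real.log_exp (t i + t j), ← Real.log_mul (Real.exp_ne_zero _) hpos.ne',
      ← norm_rowMinor_rescaleRows_sq]
    refine Real.log_le_log ?_ (norm_rowMinor_sq_le_gramDet _ hij)
    rw [norm_rowMinor_rescaleRows_sq]
    positivity
  have hsum := sum_le_sum hpair
  rw [sum_add_distrib, sum_offDiag_add, sum_const, offDiag_card, nsmul_eq_mul,
    Nat.cast_sub (Nat.le_mul_self _)] at hsum
  push_cast at hsum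
  have hcard : (#(rowSupport Y) : ℝ) ≠ 0 := Nat.cast_ne_zero.2 hne.card_ne_zero
  calc _ ≤ #(rowSupport Y) * (#(rowSupport Y) - 1) * Real.log (gramDet (rescaleRows t Y)) -
        2 * (#(rowSupport Y) - 1) * ∑ i ∈ rowSupport Y, t i := by linarith
    _ = _ := by
      rw [leveragePotential]
      field_simp

lemma bddBelow_range_leveragePotential (hcard : 2 ≤ #(rowSupport Y))
    (hY : (rowSupport Y : Set ι).Pairwise fun i j ↦ rowMinor Y i j ≠ 0) :
    BddBelow (Set.range (leveragePotential Y)) := by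
  have hcard' : (2 : ℝ) ≤ #(rowSupport Y) := by exact_mod_cast hcard
  refine ⟨(∑ p ∈ (rowSupport Y).offDiag, Real.log (‖rowMinor Y p.1 p.2‖ ^ 2)) /
    (#(rowSupport Y) * (#(rowSupport Y) - 1)), ?_⟩
  rintro _ ⟨t, rfl⟩
  rw [div_le_iff₀' (by nlinarith)]
  exact sum_offDiag_log_norm_rowMinor_le (card_pos.1 (by lia)) hY t

end Potential

section Counting

variable {ι Λ : Type*} [Fintype ι] [Fintype Λ] {S : Λ → Finset ι}

lemma sum_indicator_card_sub_one (hS : Pairwise fun i j ↦ ∃! l, i ∈ S l ∧ j ∈ S l) (i : ι) :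
    ∑ l, (S l : Set ι).indicator (fun _ ↦ (#(S l) : ℝ) - 1) i = Fintype.card ι - 1 := by
  classical
  have hunion : ({l | i ∈ S l} : Finset Λ).biUnion (fun l ↦ (S l).erase i) = univ.erase i := by
    ext j
    simp only [mem_biUnion, mem_filter_univ, mem_erase, mem_univ, and_true]
    refine ⟨fun ⟨_, _, hji, _⟩ ↦ hji, fun hji ↦ ?_⟩
    obtain ⟨l, ⟨hi, hj⟩, -⟩ := hS hji.symm
    exact ⟨l, hi, hji, hj⟩
  have hdisj : (({l | i ∈ S l} : Finset Λ) : Set Λ).PairwiseDisjoint fun l ↦ (S l).erase i := by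
    intro l hl l' hl' hne
    refine disjoint_left.2 fun j hj hj' ↦ hne ?_
    exact (hS (ne_of_mem_erase hj).symm).unique ⟨(mem_filter_univ l).1 hl, mem_of_mem_erase hj⟩
      ⟨(mem_filter_univ l').1 hl', mem_of_mem_erase hj'⟩
  have hcard := congrArg (fun s : Finset ι ↦ (#s : ℝ)) hunion
  rw [card_biUnion hdisj, cast_card_erase_of_mem (mem_univ i), card_univ, Nat.cast_sum,
    sum_filter] at hcard
  rw [← hcard]
  refine sum_congr rfl fun l _ ↦ ?_
  by_cases hi : i ∈ S l
  · rw [Set.indicator_of_mem (mem_coe.2 hi), if_pos hi, cast_card_erase_of_mem hi]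
  · rw [Set.indicator_of_notMem (mem_coe.not.2 hi), if_neg hi]

lemma sum_card_mul_card_sub_one (hS : Pairwise fun i j ↦ ∃! l, i ∈ S l ∧ j ∈ S l) :
    ∑ l, (#(S l) : ℝ) * (#(S l) - 1) = Fintype.card ι * (Fintype.card ι - 1) := by
  calc ∑ l, (#(S l) : ℝ) * (#(S l) - 1)
      = ∑ l, ∑ i, (S l : Set ι).indicator (fun _ ↦ (#(S l) : ℝ) - 1) i := by
        simp only [sum_indicator_subset _ (subset_univ _), sum_const, nsmul_eq_mul]
    _ = Fintype.card ι * (Fintype.card ι - 1) := by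
        rw [sum_comm, sum_congr rfl fun i _ ↦ sum_indicator_card_sub_one hS i, sum_const,
          card_univ, nsmul_eq_mul]

end Counting

section SylvesterGallaiSystem

variable {𝕜 ι Λ : Type*} [RCLike 𝕜] [Fintype ι]

/-- A combinatorial line design on the index set `ι`, the line `l` being the set of indices of the
nonzero rows of `Y l`: any two points lie on exactly one line, every line has at least three points,
and distinct points of a line have linearly independent rows. -/
structure IsSylvesterGallaiSystem (Y : Λ → Matrix ι (Fin 2) 𝕜) : Prop where
  existsUnique_line : Pairwise fun i j ↦ ∃! l, i ∈ rowSupport (Y l) ∧ j ∈ rowSupport (Y l)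
  three_le_card (l : Λ) : 3 ≤ #(rowSupport (Y l))
  rowMinor_ne_zero (l : Λ) : (rowSupport (Y l) : Set ι).Pairwise fun i j ↦ rowMinor (Y l) i j ≠ 0

/-- The weight of a line with `r` points. It is chosen so that `lineWeight r * (1 - 2 / r) = r - 1`,
which makes the diagonal of the design matrix constant when all leverage scores on a line are
equal. -/
noncomputable def lineWeight (r : ℕ) : ℝ := r * (r - 1) / (r - 2)

lemma lineWeight_nonneg {r : ℕ} (hr : 3 ≤ r) : 0 ≤ lineWeight r := by
  have : (3 : ℝ) ≤ r := by exact_mod_cast hr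
  exact div_nonneg (by nlinarith) (by linarith)

lemma lineWeight_mul_one_sub {r : ℕ} (hr : 3 ≤ r) : lineWeight r * (1 - 2 / r) = r - 1 := by
  have : (3 : ℝ) ≤ r := by exact_mod_cast hr
  have : (r : ℝ) - 2 ≠ 0 := by linarith
  rw [lineWeight]
  field_simp

lemma lineWeight_sq_mul_le {r : ℕ} (hr : 3 ≤ r) :
    lineWeight r ^ 2 * (2 - 4 / r) ≤ 4 * (r * (r - 1)) := by
  have hr' : (3 : ℝ) ≤ r := by exact_mod_cast hr
  have hpos : (0 : ℝ) < r - 2 := by linarith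
  calc lineWeight r ^ 2 * (2 - 4 / r) = 2 * (r * (r - 1)) * ((r - 1) / (r - 2)) := by
        rw [lineWeight]; field_simp; ring
    _ ≤ 2 * (r * (r - 1)) * 2 := by
        gcongr
        · nlinarith
        · rw [div_le_iff₀ hpos]; linarith
    _ = 4 * (r * (r - 1)) := by ring

namespace IsSylvesterGallaiSystem

variable {Y : Λ → Matrix ι (Fin 2) 𝕜}

lemma rescale (hY : IsSylvesterGallaiSystem Y) (t : EuclideanSpace ℝ ι) :
    IsSylvesterGallaiSystem fun l ↦ rescaleRows t (Y l) where
  existsUnique_line := by simpa only [rowSupport_rescaleRows] using hY.existsUnique_line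
  three_le_card := by simpa only [rowSupport_rescaleRows] using hY.three_le_card
  rowMinor_ne_zero := by
    simpa only [rowSupport_rescaleRows, ne_eq, rowMinor_rescaleRows_eq_zero_iff]
      using hY.rowMinor_ne_zero

lemma gramDet_pos (hY : IsSylvesterGallaiSystem Y) (l : Λ) : 0 < gramDet (Y l) :=
  gramDet_pos_of_pairwise_rowMinor_ne_zero ((Nat.le_succ 2).trans (hY.three_le_card l))
    (hY.rowMinor_ne_zero l)

end IsSylvesterGallaiSystem

variable [Fintype Λ]

/-- The weighted sum over all lines of the leverage deviations at the point `i`, which measures how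
far the diagonal of the design matrix is from being constant. -/
noncomputable def imbalance (Y : Λ → Matrix ι (Fin 2) 𝕜) (i : ι) : ℝ :=
  ∑ l, lineWeight #(rowSupport (Y l)) * leverageDeviation (Y l) i

namespace IsSylvesterGallaiSystem

variable {Y : Λ → Matrix ι (Fin 2) 𝕜}

lemma sum_imbalance (hY : IsSylvesterGallaiSystem Y) : ∑ i, imbalance Y i = 0 := by
  simp only [imbalance]
  rw [sum_comm]
  exact sum_eq_zero fun l _ ↦ by rw [← mul_sum, sum_leverageDeviation (hY.gramDet_pos l), mul_zero]

/-- The imbalance of the rescaled system is the gradient of a weighted sum of leverage potentials,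
which is bounded below. -/
lemma exists_sum_imbalance_rescaleRows_sq_le_one (hY : IsSylvesterGallaiSystem Y) :
    ∃ t : EuclideanSpace ℝ ι, ∑ i, imbalance (fun l ↦ rescaleRows t (Y l)) i ^ 2 ≤ 1 := by
  have hgrad (t : EuclideanSpace ℝ ι) :
      HasGradientAt (fun s ↦ ∑ l, lineWeight #(rowSupport (Y l)) * leveragePotential (Y l) s)
        (WithLp.toLp 2 (imbalance fun l ↦ rescaleRows t (Y l))) t := by
    rw [hasGradientAt_iff_hasFDerivAt]
    refine (HasFDerivAt.fun_sum fun l _ ↦ (hasGradientAt_leveragePotential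
      ((hY.rescale t).gramDet_pos l)).hasFDerivAt.const_mul _).congr_fderiv ?_
    simp only [← map_smul, ← map_sum, ← WithLp.toLp_smul, ← WithLp.toLp_sum]
    congr 2
    ext i
    simp [imbalance, rowSupport_rescaleRows]
  have hbdd : BddBelow (Set.range fun s ↦
      ∑ l, lineWeight #(rowSupport (Y l)) * leveragePotential (Y l) s) := by
    choose K hK using fun l ↦ bddBelow_range_leveragePotential
      ((Nat.le_succ 2).trans (hY.three_le_card l)) (hY.rowMinor_ne_zero l)
    refine ⟨∑ l, lineWeight #(rowSupport (Y l)) * K l, ?_⟩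
    rintro _ ⟨t, rfl⟩
    exact sum_le_sum fun l _ ↦ mul_le_mul_of_nonneg_left (hK l ⟨t, rfl⟩)
      (lineWeight_nonneg (hY.three_le_card l))
  obtain ⟨t, ht⟩ := exists_norm_gradient_le hgrad hbdd one_pos
  refine ⟨t, ?_⟩
  have hsq := pow_le_one₀ (n := 2) (norm_nonneg _) ht
  simpa only [EuclideanSpace.norm_sq_eq, Real.norm_eq_abs, sq_abs] using hsq

end IsSylvesterGallaiSystem

end SylvesterGallaiSystem

section CoordMatrix

/-- The nonzero rows of `Y` are the coordinates of the corresponding vectors `v i` with respect to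
some family `e`. -/
def IsCoordMatrix {R ι κ V : Type*} [Semiring R] [Fintype ι] [Fintype κ] [AddCommMonoid V]
    [Module R V] (Y : Matrix ι κ R) (v : ι → V) : Prop :=
  ∃ e : κ → V, ∀ i ∈ rowSupport Y, v i = ∑ k, Y i k • e k

namespace IsCoordMatrix

lemma rowMinor_ne_zero {R ι V : Type*} [CommRing R] [Fintype ι] [AddCommGroup V] [Module R V]
    {Y : Matrix ι (Fin 2) R} {v : ι → V} (hv : IsCoordMatrix Y v) {i j : ι}
    (hi : i ∈ rowSupport Y) (hj : j ∈ rowSupport Y) (hind : LinearIndependent R ![v i, v j]) :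
    rowMinor Y i j ≠ 0 := by
  obtain ⟨e, he⟩ := hv
  intro hminor
  rw [rowMinor] at hminor
  rw [LinearIndependent.pair_iff, he i hi, he j hj] at hind
  simp only [Fin.sum_univ_two] at hind
  have h₁ : Y j 1 • (Y i 0 • e 0 + Y i 1 • e 1) + (-Y i 1) • (Y j 0 • e 0 + Y j 1 • e 1) = 0 :=
    calc _ = (Y i 0 * Y j 1 - Y i 1 * Y j 0) • e 0 := by module
      _ = 0 := by rw [hminor, zero_smul]
  have h₀ : Y j 0 • (Y i 0 • e 0 + Y i 1 • e 1) + (-Y i 0) • (Y j 0 • e 0 + Y j 1 • e 1) = 0 :=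
    calc _ = (-(Y i 0 * Y j 1 - Y i 1 * Y j 0)) • e 1 := by module
      _ = 0 := by rw [hminor, neg_zero, zero_smul]
  refine mem_rowSupport.1 hj (funext fun k ↦ ?_)
  fin_cases k
  · exact (hind _ _ h₀).1
  · exact (hind _ _ h₁).1

variable {𝕜 ι V : Type*} [RCLike 𝕜] [Fintype ι] [AddCommGroup V] [Module 𝕜 V]
  {Y : Matrix ι (Fin 2) 𝕜} {v : ι → V}

lemma rescale (hv : IsCoordMatrix Y v) (t : EuclideanSpace ℝ ι) :
    IsCoordMatrix (rescaleRows t Y) fun i ↦ (Real.exp (t i / 2) : 𝕜) • v i := by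
  obtain ⟨e, he⟩ := hv
  refine ⟨e, fun i hi ↦ ?_⟩
  rw [rowSupport_rescaleRows] at hi
  simp only [he i hi, smul_sum, smul_smul]
  rfl

lemma sum_diagonal_sub_colProj_smul_eq_zero [DecidableEq ι] (hv : IsCoordMatrix Y v)
    (hY : 0 < gramDet Y) (i : ι) :
    ∑ j, (diagonal ((rowSupport Y : Set ι).indicator 1) - colProj Y : Matrix ι ι 𝕜) i j • v j =
      0 := by
  obtain ⟨e, he⟩ := hv
  have hind (j : ι) : (rowSupport Y : Set ι).indicator (1 : ι → 𝕜) j • v j = ∑ k, Y j k • e k := by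
    by_cases hj : j ∈ rowSupport Y
    · rw [Set.indicator_of_mem (mem_coe.2 hj), Pi.one_apply, one_smul, he j hj]
    · have hYj : Y j = 0 := not_not.1 (mem_rowSupport.not.1 hj)
      simp [Set.indicator_of_notMem (mem_coe.not.2 hj), hYj]
  have hproj (j : ι) : colProj Y i j • v j = ∑ k, (colProj Y i j * Y j k) • e k := by
    by_cases hj : j ∈ rowSupport Y
    · simp only [he j hj, smul_sum, smul_smul]
    · have hYj : Y j = 0 := not_not.1 (mem_rowSupport.not.1 hj)
      simp [colProj_apply_eq_zero_of_right hYj]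
  have hmul (k : Fin 2) : ∑ j, colProj Y i j * Y j k = Y i k := by
    rw [← mul_apply, colProj_mul_self (isUnit_det_conjTranspose_mul_self hY)]
  simp only [Matrix.sub_apply, sub_smul, sum_sub_distrib, hproj, diagonal_apply, ite_smul,
    zero_smul, sum_ite_eq, mem_univ, if_true, hind]
  rw [sum_comm]
  simp only [← sum_smul, hmul, sub_self]

end IsCoordMatrix

end CoordMatrix

section DesignMatrix

variable {𝕜 ι Λ : Type*} [RCLike 𝕜] [Fintype ι] [DecidableEq ι] [Fintype Λ]

/-- The weighted sum, over all lines `l`, of the projection onto the orthogonal complement of the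
columns of `Y l` inside the coordinate space of the points of `l`. -/
noncomputable def designMatrix (Y : Λ → Matrix ι (Fin 2) 𝕜) : Matrix ι ι 𝕜 :=
  ∑ l, (lineWeight #(rowSupport (Y l)) : 𝕜) •
    (diagonal ((rowSupport (Y l) : Set ι).indicator 1) - colProj (Y l))

lemma isHermitian_designMatrix (Y : Λ → Matrix ι (Fin 2) 𝕜) : (designMatrix Y).IsHermitian := by
  have hdiag (s : Set ι) : (diagonal (s.indicator 1) : Matrix ι ι 𝕜).IsHermitian :=
    isHermitian_diagonal_of_self_adjoint _ <| by
      ext i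
      by_cases hi : i ∈ s <;> simp [hi]
  refine isSelfAdjoint_sum _ fun l _ ↦ ?_
  exact IsSelfAdjoint.smul (RCLike.conj_ofReal _) ((hdiag _).sub (isHermitian_colProj (Y l)))

namespace IsSylvesterGallaiSystem

variable {Y : Λ → Matrix ι (Fin 2) 𝕜}

lemma designMatrix_apply_self (hY : IsSylvesterGallaiSystem Y) (i : ι) :
    designMatrix Y i i = ((Fintype.card ι - 1 - imbalance Y i : ℝ) : 𝕜) := by
  rw [← sum_indicator_card_sub_one hY.existsUnique_line i, imbalance, ← sum_sub_distrib,
    designMatrix, Matrix.sum_apply, RCLike.ofReal_sum]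
  refine sum_congr rfl fun l _ ↦ ?_
  rw [Matrix.smul_apply, Matrix.sub_apply, diagonal_apply_eq, colProj_apply_self, smul_eq_mul,
    leverageDeviation]
  by_cases hi : i ∈ (rowSupport (Y l) : Set ι)
  · rw [Set.indicator_of_mem hi, Set.indicator_of_mem hi, Set.indicator_of_mem hi,
      ← lineWeight_mul_one_sub (hY.three_le_card l)]
    push_cast [Pi.one_apply]
    ring
  · rw [Set.indicator_of_notMem hi, Set.indicator_of_notMem hi, Set.indicator_of_notMem hi]
    push_cast
    ring

lemma trace_designMatrix (hY : IsSylvesterGallaiSystem Y) :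
    (designMatrix Y).trace = ((Fintype.card ι * (Fintype.card ι - 1) : ℝ) : 𝕜) := by
  simp only [trace, diag_apply, hY.designMatrix_apply_self]
  rw [← RCLike.ofReal_sum, sum_sub_distrib, hY.sum_imbalance, sub_zero, sum_const, card_univ,
    nsmul_eq_mul]

lemma norm_designMatrix_apply_sq (hY : IsSylvesterGallaiSystem Y) {i j : ι} (hij : i ≠ j) :
    ‖designMatrix Y i j‖ ^ 2 =
      ∑ l, lineWeight #(rowSupport (Y l)) ^ 2 * ‖colProj (Y l) i j‖ ^ 2 := by
  obtain ⟨l, -, hl⟩ := hY.existsUnique_line hij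
  have hzero (l' : Λ) (hl' : l' ≠ l) : colProj (Y l') i j = 0 := by
    by_contra hne
    refine hl' (hl l' ⟨mem_rowSupport.2 fun hi ↦ hne ?_, mem_rowSupport.2 fun hj ↦ hne ?_⟩)
    · exact colProj_apply_eq_zero_of_left hi j
    · exact colProj_apply_eq_zero_of_right hj i
  simp only [designMatrix, Matrix.sum_apply, Matrix.smul_apply, Matrix.sub_apply,
    diagonal_apply_ne _ hij, zero_sub, smul_eq_mul, mul_neg]
  rw [Fintype.sum_eq_single l fun l' hl' ↦ by rw [hzero l' hl', mul_zero, neg_zero],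
    Fintype.sum_eq_single l fun l' hl' ↦ by rw [hzero l' hl', norm_zero]; ring,
    norm_neg, norm_mul, mul_pow, RCLike.norm_ofReal, sq_abs]

lemma sum_offDiag_norm_designMatrix_sq_le (hY : IsSylvesterGallaiSystem Y) :
    ∑ p ∈ univ.offDiag, ‖designMatrix Y p.1 p.2‖ ^ 2 ≤
      4 * (Fintype.card ι * (Fintype.card ι - 1)) := by
  calc ∑ p ∈ univ.offDiag, ‖designMatrix Y p.1 p.2‖ ^ 2
      = ∑ l, lineWeight #(rowSupport (Y l)) ^ 2 *
          ∑ p ∈ univ.offDiag, ‖colProj (Y l) p.1 p.2‖ ^ 2 := by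
        rw [sum_congr rfl fun p hp ↦ hY.norm_designMatrix_apply_sq (mem_offDiag.1 hp).2.2, sum_comm]
        simp only [mul_sum]
    _ ≤ ∑ l, 4 * ((#(rowSupport (Y l)) : ℝ) * (#(rowSupport (Y l)) - 1)) :=
        sum_le_sum fun l _ ↦ (mul_le_mul_of_nonneg_left
          (sum_offDiag_norm_colProj_sq_le (hY.gramDet_pos l)) (sq_nonneg _)).trans
          (lineWeight_sq_mul_le (hY.three_le_card l))
    _ = 4 * (Fintype.card ι * (Fintype.card ι - 1)) := by
        rw [← mul_sum, sum_card_mul_card_sub_one hY.existsUnique_line]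

lemma sum_norm_designMatrix_sq_le (hY : IsSylvesterGallaiSystem Y)
    (hbal : ∑ i, imbalance Y i ^ 2 ≤ 1) :
    ∑ i, ∑ j, ‖designMatrix Y i j‖ ^ 2 ≤
      Fintype.card ι * (Fintype.card ι - 1) * (Fintype.card ι + 3) + 1 := by
  have hdiag : ∑ i, ‖designMatrix Y i i‖ ^ 2 =
      Fintype.card ι * ((Fintype.card ι : ℝ) - 1) ^ 2 + ∑ i, imbalance Y i ^ 2 := by
    simp only [hY.designMatrix_apply_self, RCLike.norm_ofReal, sq_abs, sub_sq _ (imbalance _ _),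
      sum_add_distrib, sum_sub_distrib, ← mul_sum, hY.sum_imbalance, mul_zero, sub_zero, sum_const,
      card_univ, nsmul_eq_mul]
  rw [sum_sum_eq_sum_diag_add_sum_offDiag, hdiag]
  linarith [hY.sum_offDiag_norm_designMatrix_sq_le]

variable {V : Type*} [AddCommGroup V] [Module 𝕜 V] {v : ι → V}

lemma sum_designMatrix_smul_eq_zero (hY : IsSylvesterGallaiSystem Y)
    (hv : ∀ l, IsCoordMatrix (Y l) v) (i : ι) : ∑ j, designMatrix Y i j • v j = 0 := by
  simp only [designMatrix, Matrix.sum_apply, Matrix.smul_apply, sum_smul, smul_assoc]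
  rw [sum_comm]
  simp only [← smul_sum, (hv _).sum_diagonal_sub_colProj_smul_eq_zero (hY.gramDet_pos _), smul_zero,
    sum_const_zero]

end IsSylvesterGallaiSystem

end DesignMatrix

section CoordinateRank

namespace IsSylvesterGallaiSystem

variable {𝕜 ι Λ V : Type*} [RCLike 𝕜] [Fintype ι] [AddCommGroup V] [Module 𝕜 V]
  {Y : Λ → Matrix ι (Fin 2) 𝕜} {v : ι → V}

lemma finrank_span_range_le_three_of_imbalance [Fintype Λ] (hY : IsSylvesterGallaiSystem Y)
    (hbal : ∑ i, imbalance Y i ^ 2 ≤ 1) (hv : ∀ l, IsCoordMatrix (Y l) v) :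
    finrank 𝕜 (Submodule.span 𝕜 (Set.range v)) ≤ 3 := by
  classical
  by_contra! hdim
  have hrank := rank_add_finrank_span_range_le (hY.sum_designMatrix_smul_eq_zero hv)
  have hcard : (4 : ℝ) ≤ Fintype.card ι := by exact_mod_cast by lia
  have hrank' : ((designMatrix Y).rank : ℝ) ≤ Fintype.card ι - 4 := by
    rw [le_sub_iff_add_le]; exact_mod_cast by lia
  have htrace := norm_trace_sq_le_rank_mul_sum_norm_sq (isHermitian_designMatrix Y)
  rw [hY.trace_designMatrix, RCLike.norm_ofReal, sq_abs] at htrace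
  set N := (Fintype.card ι : ℝ)
  have hbound : (N * (N - 1)) ^ 2 ≤ (N - 4) * (N * (N - 1) * (N + 3) + 1) :=
    htrace.trans <| mul_le_mul hrank' (hY.sum_norm_designMatrix_sq_le hbal) (by positivity)
      (by linarith)
  nlinarith

theorem finrank_span_range_le_three [Finite Λ] (hY : IsSylvesterGallaiSystem Y)
    (hv : ∀ l, IsCoordMatrix (Y l) v) : finrank 𝕜 (Submodule.span 𝕜 (Set.range v)) ≤ 3 := by
  have := Fintype.ofFinite Λ
  obtain ⟨t, ht⟩ := hY.exists_sum_imbalance_rescaleRows_sq_le_one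
  have := FiniteDimensional.span_of_finite 𝕜
    (Set.finite_range fun i ↦ (Real.exp (t i / 2) : 𝕜) • v i)
  refine le_trans (Submodule.finrank_mono ?_)
    ((hY.rescale t).finrank_span_range_le_three_of_imbalance ht fun l ↦ (hv l).rescale t)
  rw [Submodule.span_le]
  rintro _ ⟨i, rfl⟩
  rw [SetLike.mem_coe, ← Submodule.smul_mem_iff _
    (RCLike.ofReal_ne_zero.2 (Real.exp_ne_zero (t i / 2)) : (Real.exp (t i / 2) : 𝕜) ≠ 0)]
  exact Submodule.subset_span ⟨i, rfl⟩

end IsSylvesterGallaiSystem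

end CoordinateRank

section CoordMatrixOfBasis

variable {K ι κ V : Type*} [Field K] [AddCommGroup V] [Module K V] {P : Submodule K V}

open scoped Classical in
/-- The matrix whose rows are the coordinates, in a basis of the subspace `P`, of those vectors
`v i` that lie in `P`; the other rows are zero. -/
noncomputable def coordMatrix (b : Basis κ K P) (v : ι → V) : Matrix ι κ K :=
  of fun i ↦ if h : v i ∈ P then ⇑(b.repr ⟨v i, h⟩) else 0

lemma coordMatrix_apply_of_mem (b : Basis κ K P) {v : ι → V} {i : ι} (h : v i ∈ P) :
    coordMatrix b v i = b.repr ⟨v i, h⟩ :=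
  dif_pos h

lemma mem_of_mem_rowSupport_coordMatrix [Fintype ι] {b : Basis κ K P} {v : ι → V} {i : ι}
    (hi : i ∈ rowSupport (coordMatrix b v)) : v i ∈ P :=
  by_contra fun hP ↦ mem_rowSupport.1 hi (dif_neg hP)

lemma mem_rowSupport_coordMatrix_iff [Fintype ι] {b : Basis κ K P} {v : ι → V} {i : ι}
    (hi : v i ≠ 0) : i ∈ rowSupport (coordMatrix b v) ↔ v i ∈ P := by
  refine ⟨mem_of_mem_rowSupport_coordMatrix, fun hP ↦ mem_rowSupport.2 fun h ↦ hi ?_⟩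
  rw [coordMatrix_apply_of_mem b hP, Finsupp.coe_eq_zero, LinearEquiv.map_eq_zero_iff] at h
  exact congrArg Subtype.val h

lemma isCoordMatrix_coordMatrix [Fintype ι] [Fintype κ] (b : Basis κ K P) (v : ι → V) :
    IsCoordMatrix (coordMatrix b v) v := by
  refine ⟨fun k ↦ b k, fun i hi ↦ ?_⟩
  have hP := mem_of_mem_rowSupport_coordMatrix hi
  rw [coordMatrix_apply_of_mem b hP]
  have h := congrArg Subtype.val (b.sum_repr ⟨v i, hP⟩)
  push_cast at h
  exact h.symm

end CoordMatrixOfBasis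

section SecantPlanes

variable {K ι V : Type*} [Field K] [AddCommGroup V] [Module K V] {v : ι → V}

/-- The planes spanned by two vectors of the family `v`. -/
def secantPlanes (K : Type*) {ι V : Type*} [Field K] [AddCommGroup V] [Module K V] (v : ι → V) :
    Set (Submodule K V) :=
  {P | ∃ i j, i ≠ j ∧ P = Submodule.span K {v i, v j}}

lemma finite_secantPlanes [Finite ι] : (secantPlanes K v).Finite := by
  refine (Set.finite_range fun p : ι × ι ↦ Submodule.span K {v p.1, v p.2}).subset ?_
  rintro _ ⟨i, j, -, rfl⟩
  exact ⟨(i, j), rfl⟩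

lemma finrank_eq_two_of_mem_secantPlanes
    (hind : Pairwise fun i j ↦ LinearIndependent K ![v i, v j])
    {P : Submodule K V} (hP : P ∈ secantPlanes K v) :
    finrank K P = 2 := by
  obtain ⟨i, j, hij, rfl⟩ := hP
  rw [← Matrix.range_cons_cons_empty (v i) (v j) ![], finrank_span_eq_card (hind hij),
    Fintype.card_fin]

lemma eq_span_pair_of_mem_secantPlanes
    (hind : Pairwise fun i j ↦ LinearIndependent K ![v i, v j])
    {P : Submodule K V} (hP : P ∈ secantPlanes K v) {i j : ι}
    (hij : i ≠ j) (hi : v i ∈ P) (hj : v j ∈ P) : P = Submodule.span K {v i, v j} := by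
  have hdim := finrank_eq_two_of_mem_secantPlanes hind hP
  have : FiniteDimensional K P := FiniteDimensional.of_finrank_pos (by lia)
  refine (Submodule.eq_of_le_of_finrank_eq ?_ ?_).symm
  · exact Submodule.span_le.2 (Set.pair_subset hi hj)
  · rw [hdim, finrank_eq_two_of_mem_secantPlanes hind ⟨i, j, hij, rfl⟩]

lemma existsUnique_secantPlane (hind : Pairwise fun i j ↦ LinearIndependent K ![v i, v j])
    {i j : ι} (hij : i ≠ j) :
    ∃! P : secantPlanes K v, v i ∈ P.1 ∧ v j ∈ P.1 :=
  ⟨⟨_, i, j, hij, rfl⟩, ⟨Submodule.subset_span (.inl rfl), Submodule.subset_span (.inr rfl)⟩,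
    fun P hP ↦ Subtype.ext (eq_span_pair_of_mem_secantPlanes hind P.2 hij hP.1 hP.2)⟩

end SecantPlanes

section Kelly

variable {𝕜 ι V : Type*} [RCLike 𝕜] [AddCommGroup V] [Module 𝕜 V] {v : ι → V}

lemma isSylvesterGallaiSystem_coordMatrix [Fintype ι]
    (hind : Pairwise fun i j ↦ LinearIndependent 𝕜 ![v i, v j])
    (hthird : Pairwise fun i j ↦ ∃ k, k ≠ i ∧ k ≠ j ∧ v k ∈ Submodule.span 𝕜 {v i, v j})
    (b : ∀ P : secantPlanes 𝕜 v, Basis (Fin 2) 𝕜 P) :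
    IsSylvesterGallaiSystem fun P ↦ coordMatrix (b P) v := by
  have hsupp {i j : ι} (hij : i ≠ j) (P : secantPlanes 𝕜 v) :
      i ∈ rowSupport (coordMatrix (b P) v) ↔ v i ∈ P.1 :=
    mem_rowSupport_coordMatrix_iff ((hind hij).ne_zero 0)
  refine ⟨fun i j hij ↦ ?_, ?_, fun P i hi j hj hij ↦ ?_⟩
  · simpa only [hsupp hij, hsupp hij.symm] using existsUnique_secantPlane hind hij
  · rintro ⟨_, i, j, hij, rfl⟩
    obtain ⟨k, hki, hkj, hk⟩ := hthird hij
    refine two_lt_card.2 ⟨i, ?_, j, ?_, k, ?_, hij, hki.symm, hkj.symm⟩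
    · exact (hsupp hij _).2 (Submodule.subset_span (.inl rfl))
    · exact (hsupp hij.symm _).2 (Submodule.subset_span (.inr rfl))
    · exact (hsupp hki _).2 hk
  · exact (isCoordMatrix_coordMatrix (b P) v).rowMinor_ne_zero hi hj (hind hij)

theorem finrank_span_range_le_three_of_forall_exists_mem_span_pair [Finite ι]
    (hind : Pairwise fun i j ↦ LinearIndependent 𝕜 ![v i, v j])
    (hthird : Pairwise fun i j ↦ ∃ k, k ≠ i ∧ k ≠ j ∧ v k ∈ Submodule.span 𝕜 {v i, v j}) :
    finrank 𝕜 (Submodule.span 𝕜 (Set.range v)) ≤ 3 := by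
  have := Fintype.ofFinite ι
  have : Finite (secantPlanes 𝕜 v) := finite_secantPlanes
  have hdim (P : secantPlanes 𝕜 v) := finrank_eq_two_of_mem_secantPlanes hind P.2
  have (P : secantPlanes 𝕜 v) : FiniteDimensional 𝕜 P.1 :=
    FiniteDimensional.of_finrank_pos (by rw [hdim P]; exact two_pos)
  exact (isSylvesterGallaiSystem_coordMatrix hind hthird
    fun P ↦ finBasisOfFinrankEq 𝕜 P (hdim P)).finrank_span_range_le_three
    fun P ↦ isCoordMatrix_coordMatrix _ v

end Kelly

section Pencil

variable {K V P : Type*} [Field K] [AddCommGroup V] [Module K V] [AddTorsor V P]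
  {p : P} {ℓ : AffineSubspace K P}

lemma exists_eq_mk'_span_singleton (hdim : finrank K ℓ.direction = 1) (hp : p ∈ ℓ) :
    ∃ v ≠ 0, ℓ = AffineSubspace.mk' p (Submodule.span K {v}) := by
  obtain ⟨v, hv, hv0, hle⟩ :=
    (rank_submodule_eq_one_iff ℓ.direction).1 (rank_eq_one_iff_finrank_eq_one.2 hdim)
  refine ⟨v, hv0, ?_⟩
  rw [le_antisymm (Submodule.span_le.2 (Set.singleton_subset_iff.2 hv)) hle,
    AffineSubspace.mk'_eq hp]

lemma linearIndependent_pair_of_mk'_span_singleton_ne {v w : V} (hv : v ≠ 0) (hw : w ≠ 0)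
    (hne : AffineSubspace.mk' p (Submodule.span K {v}) ≠
      AffineSubspace.mk' p (Submodule.span K {w})) : LinearIndependent K ![v, w] := by
  rw [LinearIndependent.pair_iff' hv]
  rintro a rfl
  rw [Submodule.span_singleton_smul_eq (IsUnit.mk0 a (left_ne_zero_of_smul hw))] at hne
  exact hne rfl

lemma mem_span_pair_of_mk'_span_singleton_le {u v w : V}
    (h : AffineSubspace.mk' p (Submodule.span K {u}) ≤
      affineSpan K (AffineSubspace.mk' p (Submodule.span K {v}) ∪
        AffineSubspace.mk' p (Submodule.span K {w}) : Set P)) :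
    u ∈ Submodule.span K {v, w} := by
  have hspan : affineSpan K (AffineSubspace.mk' p (Submodule.span K {v}) ∪
      AffineSubspace.mk' p (Submodule.span K {w}) : Set P) ≤
        AffineSubspace.mk' p (Submodule.span K {v, w}) := by
    rw [affineSpan_le, Set.union_subset_iff]
    constructor <;> refine (AffineSubspace.mk'_le_mk'_iff p).2 (Submodule.span_mono ?_)
    · exact Set.singleton_subset_iff.2 (.inl rfl)
    · exact Set.singleton_subset_iff.2 (.inr rfl)
  rw [← Submodule.span_singleton_le_iff_mem]
  exact (AffineSubspace.mk'_le_mk'_iff p).1 (h.trans hspan)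

end Pencil

theorem motzkin_observation_complex_pencil_general {𝕜 V P : Type*} [RCLike 𝕜] [AddCommGroup V]
    [Module 𝕜 V] [AddTorsor V P] (p : P) (L : Finset (AffineSubspace 𝕜 P))
    (hline : ∀ ℓ ∈ L, finrank 𝕜 ℓ.direction = 1 ∧ p ∈ ℓ)
    (hspan : ¬ ∃ A : AffineSubspace 𝕜 P, Module.rank 𝕜 A.direction ≤ 3 ∧
      (⋃ ℓ ∈ L, (ℓ : Set P)) ⊆ (A : Set P)) :
    ∃ ℓ₁ ∈ L, ∃ ℓ₂ ∈ L, ℓ₁ ≠ ℓ₂ ∧ ∀ ℓ ∈ L, ℓ ≠ ℓ₁ → ℓ ≠ ℓ₂ →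
      ¬ (ℓ : Set P) ⊆ (affineSpan 𝕜 ((ℓ₁ : Set P) ∪ (ℓ₂ : Set P)) : Set P) := by
  by_contra! hcon
  choose v hv0 hv using fun ℓ : L ↦ exists_eq_mk'_span_singleton (hline ℓ ℓ.2).1 (hline ℓ ℓ.2).2
  have hind : Pairwise fun ℓ₁ ℓ₂ ↦ LinearIndependent 𝕜 ![v ℓ₁, v ℓ₂] := fun ℓ₁ ℓ₂ hne ↦
    linearIndependent_pair_of_mk'_span_singleton_ne (p := p) (hv0 ℓ₁) (hv0 ℓ₂) <| by
      rwa [← hv, ← hv, ne_eq, Subtype.coe_inj]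
  have hthird : Pairwise fun ℓ₁ ℓ₂ ↦
      ∃ ℓ, ℓ ≠ ℓ₁ ∧ ℓ ≠ ℓ₂ ∧ v ℓ ∈ Submodule.span 𝕜 {v ℓ₁, v ℓ₂} := fun ℓ₁ ℓ₂ hne ↦ by
    obtain ⟨ℓ, hℓ, hne₁, hne₂, hle⟩ := hcon ℓ₁ ℓ₁.2 ℓ₂ ℓ₂.2 (Subtype.coe_ne_coe.2 hne)
    refine ⟨⟨ℓ, hℓ⟩, Subtype.coe_ne_coe.1 hne₁, Subtype.coe_ne_coe.1 hne₂,
      mem_span_pair_of_mk'_span_singleton_le (p := p) ?_⟩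
    rwa [← hv, ← hv, ← hv]
  have hdim := finrank_span_range_le_three_of_forall_exists_mem_span_pair hind hthird
  refine hspan ⟨AffineSubspace.mk' p (Submodule.span 𝕜 (Set.range v)), ?_, ?_⟩
  · have := FiniteDimensional.span_of_finite 𝕜 (Set.finite_range v)
    rw [AffineSubspace.direction_mk', ← finrank_eq_rank]
    exact_mod_cast hdim
  · refine Set.iUnion₂_subset fun ℓ hℓ ↦ ?_
    refine (hv ⟨ℓ, hℓ⟩).trans_le ((AffineSubspace.mk'_le_mk'_iff p).2
      (Submodule.span_mono (Set.singleton_subset_iff.2 ⟨_, rfl⟩)))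

/-- Motzkin's observation over `ℂ`: a finite pencil of at least two distinct affine lines
through a common point `p` of `ℂⁿ`, whose union is not contained in any `3`-dimensional
affine subspace, contains two lines whose spanned plane contains no other line of the
pencil. -/
theorem motzkin_observation_complex_pencil
    (n : ℕ) (p : Fin n → ℂ) (L : Finset (AffineSubspace ℂ (Fin n → ℂ)))
    (hL : 2 ≤ L.card)
    (hline : ∀ ℓ ∈ L, Module.finrank ℂ (AffineSubspace.direction ℓ) = 1 ∧ p ∈ ℓ)
    (hspan : ¬ ∃ A : AffineSubspace ℂ (Fin n → ℂ),
      Module.finrank ℂ A.direction ≤ 3 ∧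
        (⋃ ℓ ∈ L, (ℓ : Set (Fin n → ℂ))) ⊆ (A : Set (Fin n → ℂ))) :
    ∃ ℓ₁ ∈ L, ∃ ℓ₂ ∈ L, ℓ₁ ≠ ℓ₂ ∧
      ∀ ℓ ∈ L, ℓ ≠ ℓ₁ → ℓ ≠ ℓ₂ →
        ¬ (ℓ : Set (Fin n → ℂ)) ⊆
          (affineSpan ℂ ((ℓ₁ : Set (Fin n → ℂ)) ∪ (ℓ₂ : Set (Fin n → ℂ))) :
            Set (Fin n → ℂ)) := by
  refine motzkin_observation_complex_pencil_general p L hline ?_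
  rintro ⟨A, hA, hLA⟩
  exact hspan ⟨A, finrank_le_of_rank_le hA, hLA⟩
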